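/- Fix z ∈ ℂ and suppose a Jost function from the right F_R(·, λ, z) exists. Then, as X → 0⁺, ‖F_{R1}(h(X), λ, z) − (κ_- /a_-)^{iθ}·X^{iθ}·I₂‖ = O(X²), where I₂ is the 2×2 identity matrix and ‖·‖ is the maximum of the entrywise moduli. -/

import Mathlib

open Asymptotics Filter MeasureTheory Matrix

/-- The Dirac matrix `Γ¹ = diag(1,1,−1,−1)`. -/
noncomputable def Gamma1 : Matrix (Fin 4) (Fin 4) ℂ :=
  !![1, 0, 0, 0; 0, 1, 0, 0; 0, 0, -1, 0; 0, 0, 0, -1]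

/-- The Dirac matrix `Γ²`. -/
noncomputable def Gamma2 : Matrix (Fin 4) (Fin 4) ℂ :=
  !![0, 0, 0, 1; 0, 0, -1, 0; 0, -1, 0, 0; 1, 0, 0, 0]

/-- The Dirac matrix `Γ⁰`. -/
noncomputable def Gamma0 : Matrix (Fin 4) (Fin 4) ℂ :=
  !![0, 0, -Complex.I, 0; 0, 0, 0, Complex.I; Complex.I, 0, 0, 0; 0, -Complex.I, 0, 0]

/-- `e^{Γ¹s} = diag(e^s, e^s, e^{−s}, e^{−s})`, the exponential of `s·Γ¹`. -/
noncomputable def expG1 (s : ℂ) : Matrix (Fin 4) (Fin 4) ℂ :=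
  Matrix.diagonal ![Complex.exp s, Complex.exp s, Complex.exp (-s), Complex.exp (-s)]

/-- Entrywise derivative of a matrix-valued function of a real variable. -/
noncomputable def matDeriv (F : ℝ → Matrix (Fin 4) (Fin 4) ℂ) (t : ℝ) :
    Matrix (Fin 4) (Fin 4) ℂ :=
  Matrix.of fun i j => deriv (fun s => F s i j) t

/-- `F` is a Jost function from the right for the stationary Dirac equation with
potentials `a`, `b`, `c`, phase `C⁻ = Cm`, energy `λ = lam` and angular momentum `z`:
a `C¹` solution of `(−iΓ¹ d/dx − z·a·Γ² + b·Γ⁰ + c)F = λF` with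
`e^{iΓ¹C⁻(x)}·F(x)·e^{−iΓ¹λx} → I₄` as `x → −∞`. -/
def IsJostRight (a b c Cm : ℝ → ℝ) (lam : ℝ) (z : ℂ)
    (F : ℝ → Matrix (Fin 4) (Fin 4) ℂ) : Prop :=
  (∀ i j : Fin 4, ContDiff ℝ 1 fun t => F t i j) ∧
  (∀ t : ℝ, (-Complex.I) • (Gamma1 * matDeriv F t) - (z * ((a t : ℝ) : ℂ)) • (Gamma2 * F t)
      + ((b t : ℝ) : ℂ) • (Gamma0 * F t) + ((c t : ℝ) : ℂ) • F t = ((lam : ℝ) : ℂ) • F t) ∧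
  (∀ i j : Fin 4, Filter.Tendsto
      (fun t => (expG1 (Complex.I * ((Cm t : ℝ) : ℂ)) * F t *
        expG1 (-(Complex.I * ((lam : ℝ) : ℂ) * ((t : ℝ) : ℂ)))) i j)
      Filter.atBot (nhds ((1 : Matrix (Fin 4) (Fin 4) ℂ) i j)))

/-- The `2×2` block of a `4×4` matrix in block position `(p,q)`. -/
def blk (F : Matrix (Fin 4) (Fin 4) ℂ) (p q : Fin 2) : Matrix (Fin 2) (Fin 2) ℂ :=
  Matrix.of fun i j =>
    F ⟨2 * (p : ℕ) + (i : ℕ), by have := p.isLt; have := i.isLt; omega⟩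
      ⟨2 * (q : ℕ) + (j : ℕ), by have := q.isLt; have := j.isLt; omega⟩

/-- The maximum of the moduli of the entries of a `2×2` complex matrix. -/
noncomputable def mnorm2 (M : Matrix (Fin 2) (Fin 2) ℂ) : ℝ :=
  max (max ‖M 0 0‖ ‖M 0 1‖)
      (max ‖M 1 0‖ ‖M 1 1‖)

/-!
Split the first two columns of the Jost function into an upper block `u` and a lower block `v`. They
solve `u' = i(λ - c) u + P v`, `v' = -i(λ - c) v + P u`, where the coupling `P` is `O(e^{κ₋x})` and
`c - c₋` is `O(e^{2κ₋x})` at `-∞`. The Jost condition forces `v → 0`, hence `v = O(e^{κ₋x})`, and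
therefore `P v = O(e^{2κ₋x})` and `u = e^{i(λ - c₋)x} I₂ + O(e^{2κ₋x})`. On the other hand
`g(x) = (a₋/κ₋) e^{κ₋x} (1 + O(e^{2κ₋x}))`, so `((κ₋/a₋) g(x))^{iθ}` is the same plane wave up
to `O(e^{2κ₋x}) = O(g(x)²)`, and `X = g(x)` gives the claim.
-/

section

open scoped Topology

section PlaneWave

/-- The plane wave `s ↦ e^{iωs}` of frequency `ω`. It is written so that `planeWave θ (Real.log X)`
unfolds to the power `X^{iθ}` of the theorem. -/
noncomputable def planeWave (ω s : ℝ) : ℂ :=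
  Complex.exp (Complex.I * ω * s)

lemma norm_planeWave (ω s : ℝ) : ‖planeWave ω s‖ = 1 := by
  simpa [planeWave, mul_assoc] using Complex.norm_exp_I_mul_ofReal (ω * s)

lemma planeWave_add (ω s t : ℝ) : planeWave ω (s + t) = planeWave ω s * planeWave ω t := by
  simp only [planeWave, ← Complex.exp_add, Complex.ofReal_add, mul_add]

lemma planeWave_mul_left (ω κ s : ℝ) : planeWave (ω * κ) s = planeWave ω (κ * s) := by
  simp only [planeWave, Complex.ofReal_mul, mul_assoc]

lemma planeWave_neg_mul_planeWave (ω s : ℝ) : planeWave (-ω) s * planeWave ω s = 1 := by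
  rw [planeWave, planeWave, ← Complex.exp_add, Complex.ofReal_neg]
  simp

lemma hasDerivAt_planeWave (ω s : ℝ) :
    HasDerivAt (planeWave ω) (Complex.I * ω * planeWave ω s) s := by
  have hphase : HasDerivAt (fun s : ℝ => Complex.I * ω * (s : ℂ)) (Complex.I * ω) s := by
    simpa using (hasDerivAt_id s).ofReal_comp.const_mul (Complex.I * (ω : ℂ))
  exact hphase.cexp.congr_deriv (mul_comm _ _)

lemma norm_planeWave_sub_planeWave_le (ω s t : ℝ) :
    ‖planeWave ω s - planeWave ω t‖ ≤ ‖ω * (s - t)‖ := by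
  have hfactor : planeWave ω s - planeWave ω t = planeWave ω t * (planeWave ω (s - t) - 1) := by
    rw [mul_sub, ← planeWave_add, add_sub_cancel, mul_one]
  rw [hfactor, norm_mul, norm_planeWave, one_mul]
  simpa [planeWave, mul_assoc] using Real.norm_exp_I_mul_ofReal_sub_one_le (x := ω * (s - t))

variable {α E : Type*} [NormedAddCommGroup E] [NormedSpace ℂ E]

lemma isBigO_smul_left_iff_of_norm_eq_one {l : Filter α} {w : α → ℂ} {f : α → E} {g : α → ℝ}
    (hw : ∀ x, ‖w x‖ = 1) : (fun x => w x • f x) =O[l] g ↔ f =O[l] g := by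
  simp only [← isBigO_norm_left (f' := fun x => w x • f x), norm_smul, hw, one_mul,
    isBigO_norm_left]

lemma tendsto_smul_zero_iff_of_norm_eq_one {l : Filter α} {w : α → ℂ} {f : α → E}
    (hw : ∀ x, ‖w x‖ = 1) :
    Tendsto (fun x => w x • f x) l (𝓝 0) ↔ Tendsto f l (𝓝 0) := by
  rw [tendsto_zero_iff_norm_tendsto_zero, tendsto_zero_iff_norm_tendsto_zero (f := f)]
  simp only [norm_smul, hw, one_mul]

end PlaneWave

section ExponentialDecay

lemma tendsto_exp_mul_atBot {μ : ℝ} (hμ : 0 < μ) :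
    Tendsto (fun s => Real.exp (μ * s)) atBot (𝓝 0) :=
  Real.tendsto_exp_atBot.comp (tendsto_id.const_mul_atBot hμ)

lemma isLittleO_exp_mul_atBot {μ ν : ℝ} (h : μ < ν) :
    (fun s => Real.exp (ν * s)) =o[atBot] fun s => Real.exp (μ * s) := by
  refine Real.isLittleO_exp_comp_exp_comp.2 ?_
  simpa only [← sub_mul, id_eq] using tendsto_id.const_mul_atBot_of_neg (sub_neg.2 h)

variable {E : Type*} [NormedAddCommGroup E] [NormedSpace ℝ E]

lemma norm_sub_le_of_norm_deriv_le_exp {f f' : ℝ → E} {K μ u s : ℝ} (hμ : 0 < μ) (hus : u ≤ s)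
    (hf : ∀ x ∈ Set.Icc u s, HasDerivAt f (f' x) x)
    (hf' : ∀ x ∈ Set.Ico u s, ‖f' x‖ ≤ K * Real.exp (μ * x)) :
    ‖f s - f u‖ ≤ K / μ * (Real.exp (μ * s) - Real.exp (μ * u)) := by
  have hmajorant (x : ℝ) : HasDerivAt (fun x => K / μ * (Real.exp (μ * x) - Real.exp (μ * u)))
      (K * Real.exp (μ * x)) x := by
    have hexp : HasDerivAt (fun x => Real.exp (μ * x)) (Real.exp (μ * x) * μ) x :=
      (hasDerivAt_const_mul μ).exp
    exact ((hexp.sub_const (Real.exp (μ * u))).const_mul (K / μ)).congr_deriv (by field_simp)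
  exact image_norm_le_of_norm_deriv_right_le_deriv_boundary (f := fun x => f x - f u)
    (fun x hx => ((hf x hx).sub_const (f u)).continuousAt.continuousWithinAt)
    (fun x hx => ((hf x (Set.Ico_subset_Icc_self hx)).sub_const (f u)).hasDerivWithinAt) (by simp)
    hmajorant hf' (Set.right_mem_Icc.2 hus)

lemma isBigO_sub_lim_of_hasDerivAt {f f' : ℝ → E} {L : E} {μ : ℝ} (hμ : 0 < μ)
    (hf : ∀ s, HasDerivAt f (f' s) s) (hf' : f' =O[atBot] fun s => Real.exp (μ * s))
    (hlim : Tendsto f atBot (𝓝 L)) :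
    (fun s => f s - L) =O[atBot] fun s => Real.exp (μ * s) := by
  obtain ⟨K, hK, hbound⟩ := hf'.exists_pos
  obtain ⟨T, hT⟩ := eventually_atBot.1 hbound.bound
  refine IsBigO.of_bound (K / μ) ?_
  filter_upwards [eventually_le_atBot T] with s hs
  have hincrement : ∀ u ≤ s, ‖f s - f u‖ ≤ K / μ * ‖Real.exp (μ * s)‖ := fun u hu => by
    refine (norm_sub_le_of_norm_deriv_le_exp (K := K) hμ hu (fun x _ => hf x)
      fun x hx => ?_).trans ?_
    · simpa using hT x (hx.2.le.trans hs)
    · rw [Real.norm_of_nonneg (Real.exp_nonneg _)]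
      gcongr
      exact sub_le_self _ (Real.exp_nonneg _)
  exact le_of_tendsto (tendsto_const_nhds.sub hlim).norm
    ((eventually_le_atBot s).mono hincrement)

lemma isBigO_setIntegral_Iic_exp {f : ℝ → E} {μ : ℝ} (hμ : 0 < μ)
    (hf : f =O[atBot] fun s => Real.exp (μ * s)) :
    (fun t => ∫ s in Set.Iic t, f s) =O[atBot] fun t => Real.exp (μ * t) := by
  obtain ⟨K, -, hbound⟩ := hf.exists_pos
  obtain ⟨T, hT⟩ := eventually_atBot.1 hbound.bound
  refine IsBigO.of_bound (K / μ) ?_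
  filter_upwards [eventually_le_atBot T] with t ht
  have hmajorant : ∀ᵐ s ∂volume.restrict (Set.Iic t), ‖f s‖ ≤ K * Real.exp (μ * s) :=
    ae_restrict_of_forall_mem measurableSet_Iic fun s hs => by
      simpa using hT s (le_trans hs ht)
  calc ‖∫ s in Set.Iic t, f s‖ ≤ ∫ s in Set.Iic t, K * Real.exp (μ * s) :=
        norm_integral_le_of_norm_le ((integrableOn_exp_mul_Iic hμ t).const_mul K) hmajorant
    _ = K / μ * ‖Real.exp (μ * t)‖ := by
        rw [integral_const_mul, integral_exp_mul_Iic hμ, Real.norm_of_nonneg (Real.exp_nonneg _)]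
        ring

lemma isBigO_setIntegral_Iic_sub_exp {f : ℝ → ℝ} {C κ μ : ℝ} (hκ : 0 < κ) (hμ : 0 < μ)
    (hint : ∀ t, IntegrableOn f (Set.Iic t))
    (hf : (fun s => f s - C * Real.exp (κ * s)) =O[atBot] fun s => Real.exp (μ * s)) :
    (fun t => (∫ s in Set.Iic t, f s) - C / κ * Real.exp (κ * t)) =O[atBot]
      fun t => Real.exp (μ * t) := by
  refine (isBigO_setIntegral_Iic_exp hμ hf).congr_left fun t => ?_
  rw [integral_sub (hint t) ((integrableOn_exp_mul_Iic hκ t).const_mul C),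
    integral_const_mul, integral_exp_mul_Iic hκ]
  ring

lemma isEquivalent_exp_of_isBigO {g : ℝ → ℝ} {C κ μ : ℝ} (hC : C ≠ 0) (hκμ : κ < μ)
    (hg : (fun s => g s - C * Real.exp (κ * s)) =O[atBot] fun s => Real.exp (μ * s)) :
    g ~[atBot] fun s => C * Real.exp (κ * s) :=
  (hg.trans_isLittleO (isLittleO_exp_mul_atBot hκμ)).const_mul_right hC

lemma isBigO_exp_two_mul_of_isEquivalent {g : ℝ → ℝ} {C κ : ℝ} (hC : C ≠ 0)
    (hg : g ~[atBot] fun s => C * Real.exp (κ * s)) :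
    (fun s => Real.exp (2 * κ * s)) =O[atBot] fun s => g s ^ 2 := by
  have hexp : (fun s => Real.exp (κ * s)) =O[atBot] g :=
    (isBigO_self_const_mul hC _ _).trans hg.isBigO_symm
  refine (hexp.pow 2).congr_left fun s => ?_
  rw [← Real.exp_nat_mul, Nat.cast_ofNat, mul_assoc]

lemma isBigO_log_sub_log {α : Type*} {l : Filter α} {f g : α → ℝ} (hg : ∀ x, g x ≠ 0)
    (hfg : f ~[l] g) :
    (fun x => Real.log (f x) - Real.log (g x)) =O[l] fun x => (f x - g x) / g x := by
  have hratio : Tendsto (f / g) l (𝓝 1) :=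
    (isEquivalent_iff_tendsto_one (Eventually.of_forall hg)).1 hfg
  have hlog := (Real.differentiableAt_log one_ne_zero).isBigO_sub.comp_tendsto hratio
  refine hlog.congr' ?_ (Eventually.of_forall fun x => (div_sub_one (hg x)))
  filter_upwards [hratio.eventually_ne one_ne_zero] with x hx
  rw [Pi.div_apply, div_ne_zero_iff] at hx
  simp only [Function.comp_apply, Pi.div_apply, Real.log_one, sub_zero, Real.log_div hx.1 hx.2]

lemma isBigO_log_sub_log_exp {g : ℝ → ℝ} {C κ ν : ℝ} (hC : C ≠ 0) (hν : 0 < ν)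
    (hg : (fun s => g s - C * Real.exp (κ * s)) =O[atBot] fun s => Real.exp ((κ + ν) * s)) :
    (fun s => Real.log (g s) - Real.log (C * Real.exp (κ * s))) =O[atBot]
      fun s => Real.exp (ν * s) := by
  have hequiv := isEquivalent_exp_of_isBigO hC (lt_add_of_pos_right κ hν) hg
  refine (isBigO_log_sub_log (fun s => by positivity) hequiv).trans ?_
  have hquot := hg.mul ((isBigO_refl (fun s => Real.exp (-(κ * s))) atBot).const_mul_left C⁻¹)
  refine hquot.congr (fun s => ?_) fun s => ?_
  · rw [Real.exp_neg, div_eq_mul_inv, mul_inv]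
  · rw [← Real.exp_add]
    ring_nf

lemma isBigO_planeWave_log_sub_planeWave {g : ℝ → ℝ} {am κ ν θ : ℝ} (ham : 0 < am) (hκ : 0 < κ)
    (hν : 0 < ν) (hg : (fun s => g s - am / κ * Real.exp (κ * s)) =O[atBot]
      fun s => Real.exp ((κ + ν) * s)) :
    (fun s => planeWave θ (Real.log (κ / am)) * planeWave θ (Real.log (g s))
      - planeWave (θ * κ) s) =O[atBot] fun s => Real.exp (ν * s) := by
  have hlog := isBigO_log_sub_log_exp (div_pos ham hκ).ne' hν hg
  refine (isBigO_of_le _ fun s => ?_).trans (hlog.const_mul_left θ)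
  rw [← planeWave_add, planeWave_mul_left, Real.log_mul (div_pos ham hκ).ne' (Real.exp_ne_zero _),
    Real.log_exp, ← inv_div am κ, Real.log_inv]
  refine (norm_planeWave_sub_planeWave_le _ _ _).trans_eq ?_
  ring_nf

end ExponentialDecay

section MonotoneInverse

lemma tendsto_atBot_of_monotone_of_eventually_rightInverse {α β : Type*} [LinearOrder α]
    [Nonempty α] [LinearOrder β] [TopologicalSpace β] [OrderTopology β] {g : α → β} {h : β → α}
    {y : β} (hg : Monotone g) (hpos : ∀ᶠ t in atBot, y < g t)
    (hgh : ∀ᶠ X in 𝓝[>] y, g (h X) = X) : Tendsto h (𝓝[>] y) atBot := by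
  refine tendsto_atBot.2 fun T => ?_
  obtain ⟨T', hT'pos, hT'le⟩ := (hpos.and (eventually_le_atBot T)).exists
  filter_upwards [Ioo_mem_nhdsGT hT'pos, hgh] with X hX hgX
  exact ((hg.reflect_lt (hgX.trans_lt hX.2)).le).trans hT'le

lemma monotone_setIntegral_Iic {f : ℝ → ℝ} (hf : ∀ s, 0 ≤ f s)
    (hint : ∀ t, IntegrableOn f (Set.Iic t)) : Monotone fun t => ∫ s in Set.Iic t, f s :=
  fun _ t hst => setIntegral_mono_set (hint t) (Eventually.of_forall hf)
    (Set.Iic_subset_Iic.2 hst).eventuallyLE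

end MonotoneInverse

section OffDiagonalSystem

variable {E : Type*} [NormedAddCommGroup E] [NormedSpace ℂ E]

lemma isBigO_one_of_tendsto_sub_planeWave_smul {f : ℝ → E} {L : E} {ω : ℝ}
    (hlim : Tendsto (fun s => f s - planeWave ω s • L) atBot (𝓝 0)) :
    f =O[atBot] fun _ => (1 : ℝ) := by
  have hwave : (fun s => planeWave ω s • L) =O[atBot] fun _ => (1 : ℝ) :=
    (isBigO_smul_left_iff_of_norm_eq_one (norm_planeWave ω)).2 (isBigO_const_one ℝ L atBot)
  simpa only [sub_add_cancel] using (hlim.isBigO_one ℝ).add hwave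

/-- In the rotating frame `e^{-iωs} f` the equation reads `(e^{-iωs} f)' = e^{-iωs} R`. -/
lemma isBigO_sub_planeWave_smul_of_hasDerivAt {f R : ℝ → E} {L : E} {ω μ : ℝ} (hμ : 0 < μ)
    (hf : ∀ s, HasDerivAt f ((Complex.I * ω) • f s + R s) s)
    (hR : R =O[atBot] fun s => Real.exp (μ * s))
    (hlim : Tendsto (fun s => f s - planeWave ω s • L) atBot (𝓝 0)) :
    (fun s => f s - planeWave ω s • L) =O[atBot] fun s => Real.exp (μ * s) := by
  have hrotate (s : ℝ) :
      planeWave (-ω) s • (f s - planeWave ω s • L) = planeWave (-ω) s • f s - L := by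
    rw [smul_sub, smul_smul, planeWave_neg_mul_planeWave, one_smul]
  have hderiv (s : ℝ) :
      HasDerivAt (fun s => planeWave (-ω) s • f s) (planeWave (-ω) s • R s) s := by
    refine ((hasDerivAt_planeWave (-ω) s).smul (hf s)).congr_deriv ?_
    push_cast
    module
  have hlim' : Tendsto (fun s => planeWave (-ω) s • f s) atBot (𝓝 L) := by
    rw [← tendsto_sub_nhds_zero_iff]
    simpa only [hrotate] using
      (tendsto_smul_zero_iff_of_norm_eq_one (norm_planeWave (-ω))).2 hlim
  have hdecay := isBigO_sub_lim_of_hasDerivAt hμ hderiv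
    ((isBigO_smul_left_iff_of_norm_eq_one (norm_planeWave (-ω))).2 hR) hlim'
  rw [← isBigO_smul_left_iff_of_norm_eq_one (norm_planeWave (-ω))]
  simpa only [hrotate] using hdecay

lemma isBigO_frequency_smul {w : ℝ → ℝ} {y : ℝ → E} {ω μ : ℝ}
    (hw : (fun s => w s - ω) =O[atBot] fun s => Real.exp (μ * s))
    (hy : y =O[atBot] fun _ => (1 : ℝ)) :
    (fun s => (Complex.I * ((w s - ω : ℝ) : ℂ)) • y s) =O[atBot] fun s => Real.exp (μ * s) := by
  simpa using ((Complex.isBigO_ofReal_left.2 hw).const_mul_left Complex.I).smul hy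

variable {𝔸 : Type*} [NormedRing 𝔸] [NormedAlgebra ℂ 𝔸]
  {u v P R : ℝ → 𝔸} {w : ℝ → ℝ} {L : 𝔸} {κ ω : ℝ}

lemma isBigO_exp_of_hasDerivAt_offDiagonal (hκ : 0 < κ)
    (hv : ∀ s, HasDerivAt v ((-(Complex.I * w s)) • v s + R s * u s) s)
    (hw : (fun s => w s - ω) =O[atBot] fun s => Real.exp (κ * s))
    (hR : R =O[atBot] fun s => Real.exp (κ * s))
    (hu : u =O[atBot] fun _ => (1 : ℝ)) (hvlim : Tendsto v atBot (𝓝 0)) :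
    v =O[atBot] fun s => Real.exp (κ * s) := by
  have hremainder : (fun s => -(Complex.I * ((w s - ω : ℝ) : ℂ)) • v s + R s * u s) =O[atBot]
      fun s => Real.exp (κ * s) := by
    have hsource : (fun s => R s * u s) =O[atBot] fun s => Real.exp (κ * s) := by
      simpa only [mul_one] using hR.mul hu
    simpa only [neg_smul] using
      (isBigO_frequency_smul hw (hvlim.isBigO_one ℝ)).neg_left.add hsource
  have hv' (s : ℝ) : HasDerivAt v ((Complex.I * ((-ω : ℝ) : ℂ)) • v s +
      (-(Complex.I * ((w s - ω : ℝ) : ℂ)) • v s + R s * u s)) s := by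
    refine (hv s).congr_deriv ?_
    push_cast
    module
  simpa using isBigO_sub_planeWave_smul_of_hasDerivAt (L := 0) hκ hv' hremainder
    (by simpa using hvlim)

/-- The component `v` that vanishes at `-∞` is `O(e^{κs})`, and it feeds back into `u` through a
coupling that is itself `O(e^{κs})`; this is why the error in `u` is quadratic. -/
theorem isBigO_sub_planeWave_smul_of_offDiagonal (hκ : 0 < κ)
    (hu : ∀ s, HasDerivAt u ((Complex.I * w s) • u s + P s * v s) s)
    (hv : ∀ s, HasDerivAt v ((-(Complex.I * w s)) • v s + R s * u s) s)
    (hw : (fun s => w s - ω) =O[atBot] fun s => Real.exp (2 * κ * s))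
    (hP : P =O[atBot] fun s => Real.exp (κ * s)) (hR : R =O[atBot] fun s => Real.exp (κ * s))
    (hulim : Tendsto (fun s => u s - planeWave ω s • L) atBot (𝓝 0))
    (hvlim : Tendsto v atBot (𝓝 0)) :
    (fun s => u s - planeWave ω s • L) =O[atBot] fun s => Real.exp (2 * κ * s) := by
  have hu_bdd := isBigO_one_of_tendsto_sub_planeWave_smul hulim
  have hw' := hw.trans (isLittleO_exp_mul_atBot (by linarith : κ < 2 * κ)).isBigO
  have hv_decay := isBigO_exp_of_hasDerivAt_offDiagonal hκ hv hw' hR hu_bdd hvlim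
  have hfeedback : (fun s => P s * v s) =O[atBot] fun s => Real.exp (2 * κ * s) :=
    (hP.mul hv_decay).congr_right fun s => by rw [← Real.exp_add]; ring_nf
  refine isBigO_sub_planeWave_smul_of_hasDerivAt (by positivity) (fun s => ?_)
    ((isBigO_frequency_smul hw hu_bdd).add hfeedback) hulim
  refine (hu s).congr_deriv ?_
  push_cast
  module

end OffDiagonalSystem

section JostFunction

open scoped Matrix.Norms.Operator

lemma norm_entry_le_linfty_opNorm {m n α : Type*} [Fintype m] [Fintype n]
    [SeminormedAddCommGroup α] (A : Matrix m n α) (i : m) (j : n) : ‖A i j‖ ≤ ‖A‖ := by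
  have hrow : ‖A i j‖₊ ≤ ∑ k, ‖A i k‖₊ :=
    Finset.single_le_sum (f := fun k => ‖A i k‖₊) (fun _ _ => zero_le) (Finset.mem_univ j)
  have hsup : ∑ k, ‖A i k‖₊ ≤ ‖A‖₊ := by
    rw [linfty_opNNNorm_def]
    exact Finset.le_sup (f := fun i => ∑ k, ‖A i k‖₊) (Finset.mem_univ i)
  exact hrow.trans hsup

lemma norm_mnorm2_le_linfty_opNorm (A : Matrix (Fin 2) (Fin 2) ℂ) : ‖mnorm2 A‖ ≤ ‖A‖ := by
  have hnonneg : 0 ≤ mnorm2 A :=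
    (norm_nonneg (A 0 0)).trans ((le_max_left _ _).trans (le_max_left _ _))
  rw [Real.norm_of_nonneg hnonneg]
  exact max_le (max_le (norm_entry_le_linfty_opNorm A 0 0) (norm_entry_le_linfty_opNorm A 0 1))
    (max_le (norm_entry_le_linfty_opNorm A 1 0) (norm_entry_le_linfty_opNorm A 1 1))

/-- The off-diagonal `2×2` block `i(zaΓ² − bΓ⁰)` of the stationary Dirac system solved for `F'`;
the factor `Γ¹` makes the upper right and the lower left block agree. -/
noncomputable def diracCoupling (z : ℂ) (a b : ℝ) : Matrix (Fin 2) (Fin 2) ℂ :=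
  (Complex.I * z * a) • !![0, 1; -1, 0] - (b : ℂ) • !![1, 0; 0, -1]

lemma isBigO_diracCoupling {z : ℂ} {a b r : ℝ → ℝ} {l : Filter ℝ} (ha : a =O[l] r)
    (hb : b =O[l] r) : (fun s => diracCoupling z (a s) (b s)) =O[l] r := by
  have hsmul {f : ℝ → ℂ} (hf : f =O[l] r) (A : Matrix (Fin 2) (Fin 2) ℂ) :
      (fun s => f s • A) =O[l] r := by
    simpa only [smul_eq_mul, mul_one] using hf.smul (isBigO_const_one ℝ A l)
  exact (hsmul ((Complex.isBigO_ofReal_left.2 ha).const_mul_left (Complex.I * z)) _).sub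
    (hsmul (Complex.isBigO_ofReal_left.2 hb) _)

section DiracBlocks

variable (X : Matrix (Fin 4) (Fin 4) ℂ) (q : Fin 2)

lemma blk_zero_Gamma1_mul : blk (Gamma1 * X) 0 q = blk X 0 q := by
  ext i j
  fin_cases i <;> simp [blk, Gamma1, mul_apply, Fin.sum_univ_four]

lemma blk_one_Gamma1_mul : blk (Gamma1 * X) 1 q = -blk X 1 q := by
  ext i j
  fin_cases i <;> simp [blk, Gamma1, mul_apply, Fin.sum_univ_four]

lemma blk_zero_Gamma2_mul : blk (Gamma2 * X) 0 q = !![0, 1; -1, 0] * blk X 1 q := by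
  ext i j
  fin_cases i <;> simp [blk, Gamma2, mul_apply, Fin.sum_univ_four]

lemma blk_one_Gamma2_mul : blk (Gamma2 * X) 1 q = -(!![0, 1; -1, 0] * blk X 0 q) := by
  ext i j
  fin_cases i <;> simp [blk, Gamma2, mul_apply, Fin.sum_univ_four] <;> rfl

lemma blk_zero_Gamma0_mul :
    blk (Gamma0 * X) 0 q = -Complex.I • (!![1, 0; 0, -1] * blk X 1 q) := by
  ext i j
  fin_cases i <;> simp [blk, Gamma0, mul_apply, Fin.sum_univ_four] <;> rfl

lemma blk_one_Gamma0_mul :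
    blk (Gamma0 * X) 1 q = Complex.I • (!![1, 0; 0, -1] * blk X 0 q) := by
  ext i j
  fin_cases i <;> simp [blk, Gamma0, mul_apply, Fin.sum_univ_four] <;> rfl

end DiracBlocks

namespace IsJostRight

variable {a b c Cm : ℝ → ℝ} {lam : ℝ} {z : ℂ} {F : ℝ → Matrix (Fin 4) (Fin 4) ℂ}

lemma hasDerivAt_entry (hF : IsJostRight a b c Cm lam z F) (i j : Fin 4) (t : ℝ) :
    HasDerivAt (fun s => F s i j) (matDeriv F t i j) t :=
  ((hF.1 i j).differentiable one_ne_zero t).hasDerivAt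

lemma hasDerivAt_blk (hF : IsJostRight a b c Cm lam z F) (p q : Fin 2) (t : ℝ) :
    HasDerivAt (fun s => blk (F s) p q) (blk (matDeriv F t) p q) t :=
  hasDerivAt_pi.2 fun _ => hasDerivAt_pi.2 fun _ => hF.hasDerivAt_entry _ _ t

lemma blk_dirac (hF : IsJostRight a b c Cm lam z F) (p q : Fin 2) (t : ℝ) :
    (-Complex.I) • blk (Gamma1 * matDeriv F t) p q - (z * a t) • blk (Gamma2 * F t) p q
      + (b t : ℂ) • blk (Gamma0 * F t) p q + (c t : ℂ) • blk (F t) p q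
      = (lam : ℂ) • blk (F t) p q :=
  congrArg (blk · p q) (hF.2.1 t)

lemma hasDerivAt_blk_zero (hF : IsJostRight a b c Cm lam z F) (q : Fin 2) (t : ℝ) :
    HasDerivAt (fun s => blk (F s) 0 q)
      ((Complex.I * (lam - c t : ℝ)) • blk (F t) 0 q
        + diracCoupling z (a t) (b t) * blk (F t) 1 q) t := by
  refine (hF.hasDerivAt_blk 0 q t).congr_deriv ?_
  have hdirac := hF.blk_dirac 0 q t
  rw [blk_zero_Gamma1_mul, blk_zero_Gamma2_mul, blk_zero_Gamma0_mul] at hdirac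
  rw [diracCoupling, sub_mul, smul_mul_assoc, smul_mul_assoc]
  push_cast
  linear_combination (norm := module) Complex.I • hdirac
    + Complex.I_mul_I • (blk (matDeriv F t) 0 q + (b t : ℂ) • (!![1, 0; 0, -1] * blk (F t) 1 q))

lemma hasDerivAt_blk_one (hF : IsJostRight a b c Cm lam z F) (q : Fin 2) (t : ℝ) :
    HasDerivAt (fun s => blk (F s) 1 q)
      ((-(Complex.I * (lam - c t : ℝ))) • blk (F t) 1 q
        + diracCoupling z (a t) (b t) * blk (F t) 0 q) t := by
  refine (hF.hasDerivAt_blk 1 q t).congr_deriv ?_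
  have hdirac := hF.blk_dirac 1 q t
  rw [blk_one_Gamma1_mul, blk_one_Gamma2_mul, blk_one_Gamma0_mul] at hdirac
  rw [diracCoupling, sub_mul, smul_mul_assoc, smul_mul_assoc]
  push_cast
  linear_combination (norm := module) (-Complex.I) • hdirac
    + Complex.I_mul_I • (blk (matDeriv F t) 1 q + (b t : ℂ) • (!![1, 0; 0, -1] * blk (F t) 0 q))

lemma tendsto_blk (hF : IsJostRight a b c Cm lam z F) (p q : Fin 2) :
    Tendsto (fun t => blk (expG1 (Complex.I * Cm t) * F t * expG1 (-(Complex.I * lam * t))) p q)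
      atBot (𝓝 (blk 1 p q)) :=
  tendsto_pi_nhds.2 fun _ => tendsto_pi_nhds.2 fun _ => hF.2.2 _ _

end IsJostRight

lemma blk_zero_zero_expG1_mul_mul (σ τ : ℂ) (X : Matrix (Fin 4) (Fin 4) ℂ) :
    blk (expG1 σ * X * expG1 τ) 0 0 = Complex.exp (σ + τ) • blk X 0 0 := by
  ext i j
  simp only [blk, expG1, of_apply, mul_diagonal, diagonal_mul, Matrix.smul_apply, smul_eq_mul,
    Complex.exp_add]
  fin_cases i <;> fin_cases j <;> exact mul_right_comm _ _ _

lemma blk_one_zero_expG1_mul_mul (σ τ : ℂ) (X : Matrix (Fin 4) (Fin 4) ℂ) :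
    blk (expG1 σ * X * expG1 τ) 1 0 = Complex.exp (-σ + τ) • blk X 1 0 := by
  ext i j
  simp only [blk, expG1, of_apply, mul_diagonal, diagonal_mul, Matrix.smul_apply, smul_eq_mul,
    Complex.exp_add]
  fin_cases i <;> fin_cases j <;> exact mul_right_comm _ _ _

namespace IsJostRight

lemma tendsto_blk_one_zero (hF : IsJostRight a b c Cm lam z F) :
    Tendsto (fun t => blk (F t) 1 0) atBot (𝓝 0) := by
  have hphase (t : ℝ) : Complex.exp (-(Complex.I * Cm t) + -(Complex.I * lam * t))
      = planeWave 1 (-Cm t - lam * t) := by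
    rw [planeWave]
    congr 1
    push_cast
    ring
  have hblk : blk 1 1 0 = 0 := by
    ext i j
    fin_cases i <;> fin_cases j <;> simp [blk]
  have hlim := hF.tendsto_blk 1 0
  simp only [blk_one_zero_expG1_mul_mul, hphase, hblk] at hlim
  exact (tendsto_smul_zero_iff_of_norm_eq_one fun _ => norm_planeWave 1 _).1 hlim

lemma tendsto_blk_zero_zero_sub_planeWave {cm : ℝ} (hF : IsJostRight a b c Cm lam z F)
    (hCm : Tendsto (fun t => Cm t - cm * t) atBot (𝓝 0)) :
    Tendsto (fun t => blk (F t) 0 0 - planeWave (lam - cm) t • (1 : Matrix (Fin 2) (Fin 2) ℂ))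
      atBot (𝓝 0) := by
  have hphase (t : ℝ) : Complex.exp (Complex.I * Cm t + -(Complex.I * lam * t))
      = planeWave (-1) (lam * t - Cm t) := by
    rw [planeWave]
    congr 1
    push_cast
    ring
  have hblk : blk 1 0 0 = 1 := by
    ext i j
    fin_cases i <;> fin_cases j <;> simp [blk]
  have hlim := tendsto_sub_nhds_zero_iff.2 (hF.tendsto_blk 0 0)
  simp only [blk_zero_zero_expG1_mul_mul, hphase, hblk] at hlim
  have hgauge : Tendsto (fun t => blk (F t) 0 0
      - planeWave 1 (lam * t - Cm t) • (1 : Matrix (Fin 2) (Fin 2) ℂ)) atBot (𝓝 0) := by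
    refine (tendsto_smul_zero_iff_of_norm_eq_one
      (w := fun t => planeWave (-1) (lam * t - Cm t)) fun _ => norm_planeWave _ _).1 ?_
    simp only [smul_sub, smul_smul, planeWave_neg_mul_planeWave, one_smul]
    exact hlim
  have hwave : Tendsto (fun t => planeWave 1 (lam * t - Cm t) - planeWave (lam - cm) t) atBot
      (𝓝 0) := by
    refine squeeze_zero_norm (fun t => ?_) (tendsto_zero_iff_norm_tendsto_zero.1 hCm)
    rw [← one_mul (lam - cm), planeWave_mul_left]
    refine (norm_planeWave_sub_planeWave_le _ _ _).trans_eq ?_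
    rw [← norm_neg]
    ring_nf
  simpa only [sub_smul, sub_add_sub_cancel, zero_smul, add_zero] using
    hgauge.add (hwave.smul_const (1 : Matrix (Fin 2) (Fin 2) ℂ))

theorem isBigO_blk_zero_zero_sub_planeWave {cm κ : ℝ} (hF : IsJostRight a b c Cm lam z F)
    (hκ : 0 < κ) (ha : a =O[atBot] fun s => Real.exp (κ * s))
    (hb : b =O[atBot] fun s => Real.exp (κ * s))
    (hc : (fun s => c s - cm) =O[atBot] fun s => Real.exp (2 * κ * s))
    (hCm : ∀ t, Cm t = (∫ s in Set.Iic t, (c s - cm)) + cm * t) :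
    (fun s => blk (F s) 0 0 - planeWave (lam - cm) s • (1 : Matrix (Fin 2) (Fin 2) ℂ))
      =O[atBot] fun s => Real.exp (2 * κ * s) := by
  have hμ : 0 < 2 * κ := by positivity
  have hphase : Tendsto (fun t => Cm t - cm * t) atBot (𝓝 0) := by
    simpa only [hCm, add_sub_cancel_right] using
      (isBigO_setIntegral_Iic_exp hμ hc).trans_tendsto (tendsto_exp_mul_atBot hμ)
  have hfrequency : (fun s => (lam - c s) - (lam - cm)) =O[atBot]
      fun s => Real.exp (2 * κ * s) := by
    simpa only [neg_sub, sub_sub_sub_cancel_left] using hc.neg_left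
  exact isBigO_sub_planeWave_smul_of_offDiagonal hκ (hF.hasDerivAt_blk_zero 0)
    (hF.hasDerivAt_blk_one 0) hfrequency (isBigO_diracCoupling ha hb)
    (isBigO_diracCoupling ha hb) (hF.tendsto_blk_zero_zero_sub_planeWave hphase)
    hF.tendsto_blk_one_zero

theorem isBigO_blk_zero_zero_sub_planeWave_log {g : ℝ → ℝ} {cm am κ θ : ℝ}
    (hF : IsJostRight a b c Cm lam z F) (hκ : 0 < κ) (ham : 0 < am)
    (ha : a =O[atBot] fun s => Real.exp (κ * s)) (hb : b =O[atBot] fun s => Real.exp (κ * s))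
    (hc : (fun s => c s - cm) =O[atBot] fun s => Real.exp (2 * κ * s))
    (hCm : ∀ t, Cm t = (∫ s in Set.Iic t, (c s - cm)) + cm * t) (hθ : θ = (lam - cm) / κ)
    (hg : (fun s => g s - am / κ * Real.exp (κ * s)) =O[atBot] fun s => Real.exp (3 * κ * s)) :
    (fun s => blk (F s) 0 0 - (planeWave θ (Real.log (κ / am)) * planeWave θ (Real.log (g s)))
      • (1 : Matrix (Fin 2) (Fin 2) ℂ)) =O[atBot] fun s => Real.exp (2 * κ * s) := by
  have hblk := hF.isBigO_blk_zero_zero_sub_planeWave hκ ha hb hc hCm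
  have hphase : (fun s => planeWave θ (Real.log (κ / am)) * planeWave θ (Real.log (g s))
      - planeWave (lam - cm) s) =O[atBot] fun s => Real.exp (2 * κ * s) := by
    rw [← div_mul_cancel₀ (lam - cm) hκ.ne', ← hθ]
    refine isBigO_planeWave_log_sub_planeWave ham hκ (by positivity) ?_
    convert hg using 4
    ring
  have hphase_smul : (fun s => (planeWave θ (Real.log (κ / am)) * planeWave θ (Real.log (g s))
      - planeWave (lam - cm) s) • (1 : Matrix (Fin 2) (Fin 2) ℂ)) =O[atBot]
      fun s => Real.exp (2 * κ * s) := by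
    simpa only [smul_eq_mul, mul_one] using hphase.smul (isBigO_const_one ℝ _ atBot)
  refine (hblk.sub hphase_smul).congr_left fun s => ?_
  rw [sub_smul, sub_sub_sub_cancel_right]

end IsJostRight

end JostFunction

section HorizonAsymptotics

lemma isBigO_exp_of_add_log_eq {ρ φ : ℝ → ℝ} {B μ : ℝ} (hμ : 0 < μ) (hρ : ∀ s, 0 < ρ s)
    (hφ : ∀ s, B ≤ φ s) (h : ∀ s, φ s + 1 / μ * Real.log (ρ s) = s) :
    ρ =O[atBot] fun s => Real.exp (μ * s) := by
  refine IsBigO.of_bound (Real.exp (-(μ * B))) (Eventually.of_forall fun s => ?_)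
  have hlog : Real.log (ρ s) = μ * (s - φ s) := by
    rw [← eq_sub_of_add_eq' (h s)]
    field_simp
  rw [Real.norm_of_nonneg (hρ s).le, Real.norm_of_nonneg (Real.exp_nonneg _), ← Real.exp_add,
    ← Real.exp_log (hρ s), hlog]
  gcongr
  linarith [mul_le_mul_of_nonneg_left (hφ s) hμ.le]

lemma exists_le_log_sub_add_log_sub_add_log_sub {rn rc rm rp : ℝ} (α β : ℝ) {γ : ℝ} (hn : rn < rm)
    (hc : rc < rm) (hγ : γ ≤ 0) :
    ∃ B, ∀ r ∈ Set.Ioo rm rp,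
      B ≤ α * Real.log (r - rn) + β * Real.log (r - rc) + γ * Real.log (rp - r) := by
  have hcont : ContinuousOn (fun r => α * Real.log (r - rn) + β * Real.log (r - rc))
      (Set.Icc rm rp) := by
    have hlog {r₀ : ℝ} (h : r₀ < rm) :
        ContinuousOn (fun r => Real.log (r - r₀)) (Set.Icc rm rp) :=
      (continuousOn_id.sub continuousOn_const).log fun r hr => (sub_pos.2 (h.trans_le hr.1)).ne'
    exact ((hlog hn).const_mul α).add ((hlog hc).const_mul β)
  obtain ⟨B, hB⟩ := isCompact_Icc.bddBelow_image hcont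
  refine ⟨B + γ * Real.log (rp - rm), fun r hr => add_le_add ?_ ?_⟩
  · exact hB (Set.mem_image_of_mem _ (Set.Ioo_subset_Icc_self hr))
  · exact mul_le_mul_of_nonpos_left
      (Real.log_le_log (sub_pos.2 hr.2) (sub_le_sub_left hr.1.le rp)) hγ

/-- Near `r₋` only the term of the tortoise coordinate with coefficient `1/(2κ₋)` can tend to
`-∞`, the one at `r₊` having a negative coefficient. -/
theorem isBigO_radius_sub_horizon {rn rc rm rp κn κc κm κp : ℝ} {r : ℝ → ℝ} (hn : rn < rm)
    (hc : rc < rm) (hκm : 0 < κm) (hκp : κp < 0) (hr : ∀ s, r s ∈ Set.Ioo rm rp)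
    (htortoise : ∀ s, 1 / (2 * κn) * Real.log (r s - rn) + 1 / (2 * κc) * Real.log (r s - rc)
      + 1 / (2 * κm) * Real.log (r s - rm) + 1 / (2 * κp) * Real.log (rp - r s) = s) :
    (fun s => r s - rm) =O[atBot] fun s => Real.exp (2 * κm * s) := by
  obtain ⟨B, hB⟩ := exists_le_log_sub_add_log_sub_add_log_sub (rp := rp) (1 / (2 * κn))
    (1 / (2 * κc)) hn hc (one_div_nonpos.2 (by linarith : 2 * κp ≤ 0))
  refine isBigO_exp_of_add_log_eq (by positivity) (fun s => sub_pos.2 (hr s).1)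
    (fun s => hB _ (hr s)) fun s => ?_
  rw [add_right_comm, htortoise]

lemma isBigO_const_mul_div_of_mem_Ioc {α : Type*} {l : Filter α} {f r : α → ℝ} {B : ℝ} (m : ℝ)
    (hr : ∀ s, r s ∈ Set.Ioc 0 B) : (fun s => m * f s) =O[l] fun s => f s / r s := by
  refine IsBigO.of_bound (|m| * B) (Eventually.of_forall fun s => ?_)
  obtain ⟨hpos, hle⟩ := hr s
  rw [norm_mul, norm_div, Real.norm_of_nonneg hpos.le, Real.norm_eq_abs m, mul_assoc]
  gcongr
  rw [← mul_div_assoc, le_div_iff₀ hpos, mul_comm]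
  gcongr

lemma isBigO_const_div_sub_const_div {α : Type*} {l : Filter α} {r : α → ℝ} {r₀ : ℝ} (e : ℝ)
    (hr₀ : 0 < r₀) (hr : ∀ s, r₀ < r s) :
    (fun s => e / r s - e / r₀) =O[l] fun s => r s - r₀ := by
  refine IsBigO.of_bound (|e| / r₀ ^ 2) (Eventually.of_forall fun s => ?_)
  have hpos := hr₀.trans (hr s)
  rw [div_sub_div _ _ hpos.ne' hr₀.ne', mul_comm (r s) e, ← mul_sub, norm_div, norm_mul,
    norm_sub_rev, Real.norm_of_nonneg (mul_pos hpos hr₀).le, div_mul_eq_mul_div, Real.norm_eq_abs e,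
    sq]
  gcongr
  exact (hr s).le

end HorizonAsymptotics

open scoped Matrix.Norms.Operator in
theorem stmt_17_general {a b c g h Cm : ℝ → ℝ} {κ am cm lam θ : ℝ} (hκ : 0 < κ) (ham : 0 < am)
    (ha_nonneg : ∀ s, 0 ≤ a s) (ha_int : ∀ t, IntegrableOn a (Set.Iic t))
    (ha : (fun s => a s - am * Real.exp (κ * s)) =O[atBot] fun s => Real.exp (3 * κ * s))
    (hb : b =O[atBot] a) (hc : (fun s => c s - cm) =O[atBot] fun s => Real.exp (2 * κ * s))
    (hg : ∀ t, g t = ∫ s in Set.Iic t, a s) (hgh : ∀ᶠ X in 𝓝[>] 0, g (h X) = X)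
    (hCm : ∀ t, Cm t = (∫ s in Set.Iic t, (c s - cm)) + cm * t) (hθ : θ = (lam - cm) / κ)
    {z : ℂ} {F : ℝ → Matrix (Fin 4) (Fin 4) ℂ} (hF : IsJostRight a b c Cm lam z F) :
    (fun X : ℝ => mnorm2 (blk (F (h X)) 0 0
        - (Complex.exp (Complex.I * θ * Real.log (κ / am))
            * Complex.exp (Complex.I * θ * Real.log X)) • (1 : Matrix (Fin 2) (Fin 2) ℂ)))
      =O[𝓝[>] 0] fun X => X ^ 2 := by
  have ha_decay : a =O[atBot] fun s => Real.exp (κ * s) :=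
    (isEquivalent_exp_of_isBigO ham.ne' (by linarith) ha).isBigO.trans
      (isBigO_const_mul_self am _ _)
  have hg_asymp : (fun t => g t - am / κ * Real.exp (κ * t)) =O[atBot]
      fun t => Real.exp (3 * κ * t) := by
    simpa only [hg] using isBigO_setIntegral_Iic_sub_exp hκ (by positivity) ha_int ha
  have hg_equiv := isEquivalent_exp_of_isBigO (div_pos ham hκ).ne' (by linarith) hg_asymp
  have hh : Tendsto h (𝓝[>] 0) atBot := by
    refine tendsto_atBot_of_monotone_of_eventually_rightInverse ?_
      (hg_equiv.eventually_pos (Eventually.of_forall fun s => by positivity)) hgh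
    simpa only [← hg] using monotone_setIntegral_Iic ha_nonneg ha_int
  have hblk := (hF.isBigO_blk_zero_zero_sub_planeWave_log hκ ham ha_decay (hb.trans ha_decay) hc
    hCm hθ hg_asymp).trans (isBigO_exp_two_mul_of_isEquivalent (div_pos ham hκ).ne' hg_equiv)
  refine (isBigO_of_le _ fun X => norm_mnorm2_le_linfty_opNorm _).trans
    ((hblk.comp_tendsto hh).congr' ?_ ?_)
  · filter_upwards [hgh] with X hX
    simp only [Function.comp_apply, hX, planeWave]
  · filter_upwards [hgh] with X hX
    simp only [Function.comp_apply, hX]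

end

/-- For fixed `z`, the first block of the Jost function from the right
satisfies `F_{R1}(h(X),λ,z) = (κ₋/a₋)^{iθ}·X^{iθ}·I₂ + O(X²)` as `X → 0⁺`. -/
theorem stmt_17 (M Q Λ : ℝ) (hM : 0 < M) (hΛ : 0 < Λ)
    (rn rc rm rp : ℝ) (hrn : rn < 0) (hrc : 0 < rc) (hrcm : rc < rm) (hrmp : rm < rp)
    (F : ℝ → ℝ)
    (hF : ∀ r, F r = 1 - 2 * M / r + Q ^ 2 / r ^ 2 - Λ * r ^ 2 / 3)
    (hFn : F rn = 0) (hFc : F rc = 0) (hFm : F rm = 0) (hFp : F rp = 0)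
    (hFpos : ∀ r ∈ Set.Ioo rm rp, 0 < F r)
    (κn κc κm κp : ℝ)
    (hκn : κn = deriv F rn / 2) (hκc : κc = deriv F rc / 2)
    (hκm : κm = deriv F rm / 2) (hκp : κp = deriv F rp / 2)
    (hκmpos : 0 < κm) (hκpneg : κp < 0)
    (x : ℝ → ℝ)
    (hx : ∀ r, x r = 1 / (2 * κn) * Real.log (r - rn) + 1 / (2 * κc) * Real.log (r - rc)
      + 1 / (2 * κm) * Real.log (r - rm) + 1 / (2 * κp) * Real.log (rp - r))
    (rfun : ℝ → ℝ)
    (hrmem : ∀ s, rfun s ∈ Set.Ioo rm rp) (hrinv : ∀ s, x (rfun s) = s)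
    (m q : ℝ) (a b c : ℝ → ℝ)
    (ha : ∀ s, a s = Real.sqrt (F (rfun s)) / rfun s)
    (hb : ∀ s, b s = m * Real.sqrt (F (rfun s)))
    (hc : ∀ s, c s = q * Q / rfun s)
    (cm cp : ℝ) (hcm : cm = q * Q / rm) (hcp : cp = q * Q / rp)
    (am : ℝ) (ham : 0 < am)
    (haas : (fun s => a s - am * Real.exp (κm * s)) =O[atBot] fun s => Real.exp (3 * κm * s))
    (haint : Integrable a)
    (A : ℝ) (hA : A = ∫ s, a s) (hApos : 0 < A)
    (g : ℝ → ℝ) (hg : ∀ t, g t = ∫ s in Set.Iic t, a s)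
    (hfun : ℝ → ℝ) (hgh : ∀ t, hfun (g t) = t)
    (hhg : ∀ X ∈ Set.Ioo (0 : ℝ) A, g (hfun X) = X)
    (lam : ℝ)
    (Cminus : ℝ → ℝ)
    (hCminus : ∀ t, Cminus t = (∫ s in Set.Iic t, (c s - cm)) + cm * t)
    (θ : ℝ) (hθ : θ = (lam - cm) / κm)
    (z : ℂ) (FR : ℝ → Matrix (Fin 4) (Fin 4) ℂ)
    (hJost : IsJostRight a b c Cminus lam z FR) :
    (fun X : ℝ => mnorm2 (blk (FR (hfun X)) 0 0
        - (Complex.exp (Complex.I * (θ : ℂ) * ((Real.log (κm / am) : ℝ) : ℂ))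
            * Complex.exp (Complex.I * (θ : ℂ) * ((Real.log X : ℝ) : ℂ)))
          • (1 : Matrix (Fin 2) (Fin 2) ℂ)))
      =O[nhdsWithin 0 (Set.Ioi 0)] fun X => X ^ 2 := by
  have hrm : 0 < rm := hrc.trans hrcm
  have hrpos (s : ℝ) : 0 < rfun s := hrm.trans (hrmem s).1
  have hradius : (fun s => rfun s - rm) =O[atBot] fun s => Real.exp (2 * κm * s) :=
    isBigO_radius_sub_horizon (hrn.trans hrm) hrcm hκmpos hκpneg hrmem fun s => by
      rw [← hx, hrinv]
  have hmass : b =O[atBot] a := by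
    rw [funext ha, funext hb]
    exact isBigO_const_mul_div_of_mem_Ioc m fun s => ⟨hrpos s, (hrmem s).2.le⟩
  have hcharge : (fun s => c s - cm) =O[atBot] fun s => Real.exp (2 * κm * s) := by
    simp only [hc, hcm]
    exact (isBigO_const_div_sub_const_div (q * Q) hrm fun s => (hrmem s).1).trans hradius
  have ha_nonneg (s : ℝ) : 0 ≤ a s := by
    rw [ha]
    exact div_nonneg (Real.sqrt_nonneg _) (hrpos s).le
  have hinverse : ∀ᶠ X in nhdsWithin 0 (Set.Ioi 0), g (hfun X) = X :=
    mem_of_superset (Ioo_mem_nhdsGT hApos) hhg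
  exact stmt_17_general hκmpos ham ha_nonneg (fun _ => haint.integrableOn) haas hmass hcharge hg
    hinverse hCminus hθ hJost
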